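/- arXiv:math/0606212 — 2 statements merged into one kernel-verified Lean document; each statement's English description precedes it below -/
import Mathlib

section
/- The graph Γ(1) is connected. -/
/-- The bijection `σ̇_i` of `ℤ^l(s)` (entries 0-indexed): `σ̇_0` sends `(s_1,…,s_l)` to
`(s_l + n, s_2, …, s_{l−1}, s_1 − n)`, and for `1 ≤ i ≤ l−1`, `σ̇_i` swaps the `i`-th
and `(i+1)`-th entries. -/
def sigmaMove (d : ℕ) (c : ℤ) (i : Fin d) (v : Fin d → ℤ) : Fin d → ℤ := fun j =>
  if i.val = 0 then
    (if j.val = 0 then v ⟨d - 1, by have := j.isLt; omega⟩ + c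
     else if j.val = d - 1 then v ⟨0, by have := j.isLt; omega⟩ - c
     else v j)
  else
    (if j.val + 1 = i.val then v i
     else if j.val = i.val then v ⟨i.val - 1, by have := i.isLt; omega⟩
     else v j)

/-- Membership in the orbit `Ẇ_l·r` of `r` under the group generated by the
involutions `σ̇_0, …, σ̇_{l−1}`. -/
def inOrbit (n l : ℕ) (r v : Fin l → ℤ) : Prop :=
  Relation.EqvGen (fun x y => ∃ i : Fin l, y = sigmaMove l (n : ℤ) i x) r v

/-- The arrows of the graph `Γ(M)`: `s_l → t_l` whenever `t_l = σ̇_i.s_l` and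
`s_i − s_{i+1} ≥ M` (with `s_0 := n + s_l` when `i = 0`). -/
def gammaStep (n l : ℕ) (M : ℤ) (x y : Fin l → ℤ) : Prop :=
  ∃ i : Fin l, y = sigmaMove l (n : ℤ) i x ∧
    (if i.val = 0 then
       (n : ℤ) + x ⟨l - 1, by have := i.isLt; omega⟩ - x ⟨0, by have := i.isLt; omega⟩ ≥ M
     else x ⟨i.val - 1, by have := i.isLt; omega⟩ - x i ≥ M)

/-!
Each `σ̇_i` is an affine reflection `x ↦ x + δ(x) α`, where `α` is the difference of two basis
vectors and `δ(x + t α) = δ(x) - 2 t`; the number `δ(x)` is the quantity that decides whether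
`x → σ̇_i.x` is an arrow of `Γ(M)`. Hence `σ̇_i` is an involution that negates `δ` and fixes the
points with `δ(x) = 0`. So for `M ≤ 1` every move `x ↦ σ̇_i.x` is an arrow (`δ(x) ≥ 1`), a
reversed arrow (`δ(x) ≤ -1`), or trivial (`δ(x) = 0`), and a chain of moves is an undirected path.
-/

section SigmaReflection

variable {l : ℕ}

theorem coe_finRotate_symm (i : Fin l) :
    ((finRotate l).symm i : ℕ) = if (i : ℕ) = 0 then l - 1 else i - 1 := by
  obtain _ | k := l
  · exact i.elim0
  · rw [finRotate_symm_apply, Fin.coe_sub_one]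
    simp only [Fin.val_eq_zero_iff, Nat.add_sub_cancel]

theorem finRotate_symm_apply_ne_self (hl : 2 ≤ l) (i : Fin l) : (finRotate l).symm i ≠ i := by
  have hi : i ∈ (finRotate l).support := by simp only [support_finRotate_of_le hl, Finset.mem_univ]
  rwa [← Equiv.Perm.support_inv, Equiv.Perm.mem_support] at hi

/-- The quantity `s_i − s_{i+1}` (with `s_0 := s_l + c`) tested by the arrows of `Γ(M)` with
label `i`. With 0-indexed entries this involves `i` and its cyclic predecessor
`(finRotate l).symm i`. -/
def sigmaGap (c : ℤ) (i : Fin l) (x : Fin l → ℤ) : ℤ :=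
  x ((finRotate l).symm i) - x i + if (i : ℕ) = 0 then c else 0

/-- The direction of the affine reflection `σ̇_i`: the basis vector at `i` minus the one at its
cyclic predecessor. -/
def sigmaRoot (i : Fin l) : Fin l → ℤ :=
  Pi.single i 1 - Pi.single ((finRotate l).symm i) 1

theorem sigmaRoot_apply (i j : Fin l) :
    sigmaRoot i j = (if j = i then 1 else 0) - if j = (finRotate l).symm i then 1 else 0 := by
  simp only [sigmaRoot, Pi.sub_apply, Pi.single_apply]

theorem sigmaGap_add_smul_sigmaRoot (hl : 2 ≤ l) (c : ℤ) (i : Fin l) (x : Fin l → ℤ) (t : ℤ) :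
    sigmaGap c i (x + t • sigmaRoot i) = sigmaGap c i x - 2 * t := by
  have hpred := finRotate_symm_apply_ne_self hl i
  simp only [sigmaGap, Pi.add_apply, Pi.smul_apply, sigmaRoot_apply, hpred, hpred.symm, if_true,
    if_false, smul_eq_mul]
  ring

theorem sigmaMove_eq_add_smul_sigmaRoot (hl : 2 ≤ l) (c : ℤ) (i : Fin l) (x : Fin l → ℤ) :
    sigmaMove l c i x = x + sigmaGap c i x • sigmaRoot i := by
  funext j
  have hpred := coe_finRotate_symm i
  simp only [sigmaMove, sigmaGap, Pi.add_apply, Pi.smul_apply, sigmaRoot_apply, smul_eq_mul]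
  grind

theorem sigmaGap_sigmaMove (hl : 2 ≤ l) (c : ℤ) (i : Fin l) (x : Fin l → ℤ) :
    sigmaGap c i (sigmaMove l c i x) = -sigmaGap c i x := by
  rw [sigmaMove_eq_add_smul_sigmaRoot hl, sigmaGap_add_smul_sigmaRoot hl]
  ring

theorem sigmaMove_involutive (hl : 2 ≤ l) (c : ℤ) (i : Fin l) :
    Function.Involutive (sigmaMove l c i) := fun x => by
  rw [sigmaMove_eq_add_smul_sigmaRoot hl c i (sigmaMove l c i x), sigmaGap_sigmaMove hl,
    sigmaMove_eq_add_smul_sigmaRoot hl, neg_smul, add_neg_cancel_right]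

theorem sigmaMove_eq_self_of_sigmaGap_eq_zero (hl : 2 ≤ l) {c : ℤ} {i : Fin l} {x : Fin l → ℤ}
    (hx : sigmaGap c i x = 0) : sigmaMove l c i x = x := by
  rw [sigmaMove_eq_add_smul_sigmaRoot hl, hx, zero_smul, add_zero]

end SigmaReflection

section Gamma

variable {n l : ℕ} {M : ℤ}

theorem gammaStep_sigmaMove {i : Fin l} {x : Fin l → ℤ} (hx : M ≤ sigmaGap n i x) :
    gammaStep n l M x (sigmaMove l n i x) := by
  refine ⟨i, rfl, ?_⟩
  have hpred := coe_finRotate_symm i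
  simp only [sigmaGap] at hx
  grind

theorem eqvGen_gammaStep_sigmaMove (hl : 2 ≤ l) (hM : M ≤ 1) (i : Fin l) (x : Fin l → ℤ) :
    Relation.EqvGen (gammaStep n l M) x (sigmaMove l n i x) := by
  rcases lt_trichotomy (sigmaGap n i x) 0 with hneg | hzero | hpos
  · have hgap : M ≤ sigmaGap n i (sigmaMove l n i x) := by
      rw [sigmaGap_sigmaMove hl]
      omega
    have harrow := gammaStep_sigmaMove hgap
    rw [sigmaMove_involutive hl] at harrow
    exact .symm _ _ (.rel _ _ harrow)
  · rw [sigmaMove_eq_self_of_sigmaGap_eq_zero hl hzero]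
    exact .refl x
  · exact .rel _ _ (gammaStep_sigmaMove (by omega))

theorem stmt_6_general (hl : 2 ≤ l) (hM : M ≤ 1) {v w : Fin l → ℤ} (hvw : inOrbit n l v w) :
    Relation.EqvGen (gammaStep n l M) v w := by
  refine (Relation.EqvGen.is_equivalence _).eqvGen_iff.mp (Relation.EqvGen.mono ?_ _ _ hvw)
  rintro x _ ⟨i, rfl⟩
  exact eqvGen_gammaStep_sigmaMove hl hM i x

end Gamma

/-- The graph `Γ(1)` is connected: any two vertices (elements of the orbit `Ẇ_l·r`)
are joined by an undirected path of arrows of `Γ(1)`. -/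
theorem stmt_6 (n l : ℕ) (hn : 2 ≤ n) (hl : 2 ≤ l) (s : ℤ)
    (r : Fin l → ℤ)
    (hr : (∑ i, r i = s) ∧ (∀ i j : Fin l, i ≤ j → r j ≤ r i) ∧
          r ⟨0, by omega⟩ - r ⟨l - 1, by omega⟩ ≤ (n : ℤ))
    (v w : Fin l → ℤ) (hv : inOrbit n l r v) (hw : inOrbit n l r w) :
    Relation.EqvGen (gammaStep n l 1) v w :=
  stmt_6_general hl le_rfl (.trans _ _ _ (.symm _ _ hv) hw)
end

section
/- Let m_0^{(min)} := min over a_l ∈ A_{l,n}(s) of m_0(n,l,a_l), and set c := n + ⌈−m_0^{(min)}·n⌉ + nl ∈ ℤ. Then for every M ∈ ℕ, one has b(M) ∈ A(b(M + c)). -/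
/-!
An integer vector `v` carries `C_b` onto `C_{b + A v}` and preserves ℤ-connectedness, so
`c ∈ A(b)` implies `c + A v ∈ A(b + A v)`. Moreover `A(b)` grows when `b` does, and is closed
under lowering `c`.

Every integer vector `w` admits an integer `v` with `w ≤ A v ≤ w + 1`, because `0` and the
fundamental weights represent all classes of the weight lattice `ℤ^{l-1}` modulo the root lattice
`A · ℤ^{l-1}`. Rounding up, every real `b` and `m` admit an integer `v` with
`b - m ≤ A v < b - m + 2`. If `c ∈ A(b₀)`, where `b₀ ≤ 0` and all `c_i ≥ m`, then
`b ≤ c + A v` and `b₀ + A v ≤ b + 2 - m`, so `b ∈ A(b + 2 - m)` for any `b` whatsoever. A single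
point of `A(b(0; n, l, a))` thus settles all `r` and `M`, since increasing `M` by at least
`n (2 - m)` raises `b(M)` by at least `2 - m` in every coordinate.
-/

/-- The Cartan matrix of `sl_l`: `A_{ii} = 2`, `A_{ij} = −1` if `|i−j| = 1`, `0` otherwise. -/
def cartanA (l : ℕ) : Matrix (Fin (l - 1)) (Fin (l - 1)) ℝ :=
  Matrix.of fun i j => if i = j then 2 else if i.val + 1 = j.val ∨ j.val + 1 = i.val then -1 else 0

/-- The cone `C_b = {x ∈ ℝ^{l−1} : A·x ≥ b}` (inequalities componentwise). -/
def cone (l : ℕ) (b : Fin (l - 1) → ℝ) : Set (Fin (l - 1) → ℝ) :=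
  {x | ∀ i, (cartanA l).mulVec x i ≥ b i}

/-- A point of `ℝ^d` with integer coordinates. -/
def IsIntPt {d : ℕ} (x : Fin d → ℝ) : Prop := ∀ i, ∃ z : ℤ, x i = (z : ℝ)

/-- `x` and `y` are ℤ-connected in `D`: there is a finite sequence of integer points of
`D` from `x` to `y` whose consecutive differences are `±ε_j` for standard basis
vectors `ε_j`. -/
def ZConn {d : ℕ} (D : Set (Fin d → ℝ)) (x y : Fin d → ℝ) : Prop :=
  ∃ (N : ℕ) (p : ℕ → Fin d → ℝ), p 0 = x ∧ p N = y ∧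
    (∀ k ≤ N, p k ∈ D ∧ IsIntPt (p k)) ∧
    ∀ k < N, ∃ j : Fin d,
      (p (k + 1) = fun m => p k m + if m = j then 1 else 0) ∨
      (p (k + 1) = fun m => p k m - if m = j then 1 else 0)

/-- `A(b) = {c ≤ b : any two integer points of C_b are ℤ-connected in C_c}`. -/
def calA (l : ℕ) (b : Fin (l - 1) → ℝ) : Set (Fin (l - 1) → ℝ) :=
  {c | (∀ i, c i ≤ b i) ∧
    ∀ x y : Fin (l - 1) → ℝ, x ∈ cone l b → y ∈ cone l b →
      IsIntPt x → IsIntPt y → ZConn (cone l c) x y}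

/-- The vector `b(M; n, l, r)` with entries `b_i^{(M)} = (M + r_{i+1} − r_i)/n`. -/
noncomputable def bvec (n l : ℕ) (r : Fin l → ℤ) (M : ℤ) : Fin (l - 1) → ℝ := fun i =>
  ((M : ℝ) + (r ⟨i.val + 1, by have := i.isLt; omega⟩ : ℝ) -
    (r ⟨i.val, by have := i.isLt; omega⟩ : ℝ)) / (n : ℝ)

/-- The set of values `min_{1 ≤ i ≤ l−1} c_i`, where `c` ranges over the integer
points of `A(b)`. -/
def minSet (l : ℕ) (hl : 2 ≤ l) (b : Fin (l - 1) → ℝ) : Set ℤ :=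
  {v | ∃ c : Fin (l - 1) → ℤ, (fun i => (c i : ℝ)) ∈ calA l b ∧
        v = Finset.univ.inf' ⟨⟨0, by omega⟩, Finset.mem_univ _⟩ c}

/-- The fundamental domain `A_{l,n}(s)`. -/
def Adom (n l : ℕ) (hl : 2 ≤ l) (s : ℤ) : Set (Fin l → ℤ) :=
  {a | (∑ i, a i = s) ∧ (∀ i j : Fin l, i ≤ j → a j ≤ a i) ∧
       a ⟨0, by omega⟩ - a ⟨l - 1, by omega⟩ ≤ (n : ℤ)}

section IntegerPoints

variable {d : ℕ} {D E : Set (Fin d → ℝ)} {x y v : Fin d → ℝ}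

lemma IsIntPt.add (hx : IsIntPt x) (hy : IsIntPt y) : IsIntPt (x + y) := fun i => by
  obtain ⟨a, ha⟩ := hx i
  obtain ⟨b, hb⟩ := hy i
  exact ⟨a + b, by simp [ha, hb]⟩

lemma IsIntPt.sub (hx : IsIntPt x) (hy : IsIntPt y) : IsIntPt (x - y) := fun i => by
  obtain ⟨a, ha⟩ := hx i
  obtain ⟨b, hb⟩ := hy i
  exact ⟨a - b, by simp [ha, hb]⟩

lemma ZConn.mono (hDE : D ⊆ E) : ZConn D x y → ZConn E x y := by
  rintro ⟨N, p, h0, hN, hmem, hstep⟩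
  exact ⟨N, p, h0, hN, fun k hk => ⟨hDE (hmem k hk).1, (hmem k hk).2⟩, hstep⟩

lemma ZConn.add_right (h : ZConn D x y) (hv : IsIntPt v) :
    ZConn ((· - v) ⁻¹' D) (x + v) (y + v) := by
  obtain ⟨N, p, rfl, rfl, hmem, hstep⟩ := h
  refine ⟨N, fun k => p k + v, rfl, rfl, fun k hk => ⟨?_, (hmem k hk).2.add hv⟩, fun k hk => ?_⟩
  · simpa only [Set.mem_preimage, add_sub_cancel_right] using (hmem k hk).1
  · obtain ⟨j, hj | hj⟩ := hstep k hk
    · exact ⟨j, Or.inl (by funext i; simp only [hj, Pi.add_apply]; ring)⟩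
    · exact ⟨j, Or.inr (by funext i; simp only [hj, Pi.add_apply]; ring)⟩

end IntegerPoints

section Cone

variable {l : ℕ} {b b' c c' v : Fin (l - 1) → ℝ}

lemma cone_anti (h : b ≤ b') : cone l b' ⊆ cone l b := fun _ hx i => (h i).trans (hx i)

lemma preimage_sub_cone (b v : Fin (l - 1) → ℝ) :
    (· - v) ⁻¹' cone l b = cone l (b + (cartanA l).mulVec v) := by
  ext x
  simp only [cone, Set.mem_preimage, Set.mem_ofPred_eq, Matrix.mulVec_sub, Pi.sub_apply,
    Pi.add_apply, ge_iff_le, le_sub_iff_add_le]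

lemma calA_mono (hc : c ∈ calA l b) (hcc' : c' ≤ c) (hbb' : b ≤ b') : c' ∈ calA l b' :=
  ⟨(hcc'.trans hc.1).trans hbb', fun x y hx hy hxi hyi =>
    (hc.2 x y (cone_anti hbb' hx) (cone_anti hbb' hy) hxi hyi).mono (cone_anti hcc')⟩

lemma add_mulVec_mem_calA (hc : c ∈ calA l b) (hv : IsIntPt v) :
    c + (cartanA l).mulVec v ∈ calA l (b + (cartanA l).mulVec v) := by
  refine ⟨fun i => add_le_add_left (hc.1 i) _, fun x y hx hy hxi hyi => ?_⟩
  rw [← preimage_sub_cone] at hx hy ⊢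
  simpa only [sub_add_cancel] using
    (hc.2 (x - v) (y - v) hx hy (hxi.sub hv) (hyi.sub hv)).add_right hv

end Cone

section RootLattice

/-- The Cartan matrix is the negative discrete Laplacian with Dirichlet boundary conditions; the
coordinate indexed by `j : Fin (l - 1)` sits at the interior point `j + 1` of `{0, …, l}`. -/
lemma cartanA_mulVec_eq_neg_laplacian {l : ℕ} (g : ℕ → ℝ) (hg0 : g 0 = 0) (hgl : g l = 0)
    (i : Fin (l - 1)) :
    (cartanA l).mulVec (fun j => g (j + 1)) i = 2 * g (i + 1) - g i - g (i + 2) := by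
  obtain ⟨d, rfl⟩ : ∃ d, l = d + 1 := ⟨l - 1, by have := i.isLt; omega⟩
  let F : ℕ → ℝ := fun p =>
    2 * (if i + 1 = p then g p else 0) - (if i = p then g p else 0)
      - (if i + 2 = p then g p else 0)
  have hF0 : F 0 = 0 := by simp [F, hg0]
  have hFl : F (d + 1) = 0 := by simp [F, hgl]
  calc (cartanA (d + 1)).mulVec (fun j => g (j + 1)) i
      = ∑ j : Fin d, F (j + 1) := by
        simp only [Matrix.mulVec, dotProduct, cartanA, Matrix.of_apply, Fin.ext_iff, F]
        refine Finset.sum_congr rfl fun j _ => ?_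
        split_ifs <;> first | omega | ring
    _ = ∑ p ∈ Finset.range (d + 2), F p := by
        rw [Finset.sum_range_succ, hFl, Finset.sum_range_succ', hF0, add_zero, add_zero,
          Finset.sum_range]
    _ = 2 * g (i + 1) - g i - g (i + 2) := by
        have hi : (i : ℕ) < d := i.isLt
        simp only [F, Finset.sum_sub_distrib, ← Finset.mul_sum, Finset.sum_ite_eq,
          Finset.mem_range]
        rw [if_pos (by omega), if_pos (by omega), if_pos (by omega)]

lemma exists_int_neg_laplacian_mem_Icc {l : ℕ} (hl : 0 < l) (w : ℕ → ℤ) :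
    ∃ g : ℕ → ℤ, g 0 = 0 ∧ g l = 0 ∧
      ∀ i, 2 * g (i + 1) - g i - g (i + 2) ∈ Set.Icc (w i) (w i + 1) := by
  -- `-S` solves the equation exactly but need not vanish at `l`. Adding `p * t` leaves a residue
  -- `0 ≤ ρ < l` there, which a kink at `l - ρ`, with slope change one, brings back to zero.
  let S : ℕ → ℤ := fun p => ∑ q ∈ Finset.range p, ∑ j ∈ Finset.range q, w j
  have hS (i : ℕ) : S (i + 2) = 2 * S (i + 1) - S i + w i := by
    simp only [S, Finset.sum_range_succ]
    ring
  let ρ : ℤ := -S l % l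
  let t : ℤ := -(-S l / l)
  have hρ_nonneg : 0 ≤ ρ := Int.emod_nonneg _ (by omega)
  have hρ_lt : ρ < l := Int.emod_lt_of_pos _ (by omega)
  have hρt : l * t - S l = ρ := by linarith [Int.emod_add_mul_ediv (-S l) l]
  refine ⟨fun p => p * t - S p - max 0 (p + ρ - l), ?_, ?_, fun i => ?_⟩
  · have hS0 : S 0 = 0 := rfl
    simp only [hS0, Nat.cast_zero]
    omega
  · simp only [hρt]
    omega
  · simp only [hS, Set.mem_Icc]
    push_cast
    constructor <;> ring_nf <;> omega

lemma exists_isIntPt_cartanA_mulVec_mem_Ico {l : ℕ} (b : Fin (l - 1) → ℝ) :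
    ∃ v, IsIntPt v ∧ ∀ i, (cartanA l).mulVec v i ∈ Set.Ico (b i) (b i + 2) := by
  obtain rfl | hl := l.eq_zero_or_pos
  · exact ⟨0, fun i => i.elim0, fun i => i.elim0⟩
  obtain ⟨g, hg0, hgl, hg⟩ := exists_int_neg_laplacian_mem_Icc hl
    fun j => if h : j < l - 1 then ⌈b ⟨j, h⟩⌉ else 0
  refine ⟨fun j => (g (j + 1) : ℝ), fun j => ⟨_, rfl⟩, fun i => ?_⟩
  rw [cartanA_mulVec_eq_neg_laplacian (fun p => (g p : ℝ)) (by simp [hg0]) (by simp [hgl])]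
  obtain ⟨hlower, hupper⟩ := hg i
  rw [dif_pos i.isLt] at hlower hupper
  have hlower' : (⌈b i⌉ : ℝ) ≤ 2 * g (i + 1) - g i - g (i + 2) := by exact_mod_cast hlower
  have hupper' : (2 * g (i + 1) - g i - g (i + 2) : ℝ) ≤ ⌈b i⌉ + 1 := by exact_mod_cast hupper
  constructor <;> linarith [Int.le_ceil (b i), Int.ceil_lt_add_one (b i)]

end RootLattice

lemma mem_calA_of_forall_add_le {l : ℕ} {b₀ c b b' : Fin (l - 1) → ℝ} {m : ℝ}
    (hc : c ∈ calA l b₀) (hmc : ∀ i, m ≤ c i) (hbb' : ∀ i, b i + b₀ i + (2 - m) ≤ b' i) :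
    b ∈ calA l b' := by
  obtain ⟨v, hv, hAv⟩ := exists_isIntPt_cartanA_mulVec_mem_Ico (fun i => b i - m)
  refine calA_mono (add_mulVec_mem_calA hc hv) (fun i => ?_) (fun i => ?_)
  · linarith [hmc i, (hAv i).1, Pi.add_apply c ((cartanA l).mulVec v) i]
  · linarith [hbb' i, (hAv i).2, Pi.add_apply b₀ ((cartanA l).mulVec v) i]

lemma exists_mem_calA_forall_le_of_mem_minSet {l : ℕ} {hl : 2 ≤ l} {b : Fin (l - 1) → ℝ} {m : ℤ}
    (hm : m ∈ minSet l hl b) : ∃ c ∈ calA l b, ∀ i, (m : ℝ) ≤ c i := by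
  obtain ⟨c, hc, rfl⟩ := hm
  exact ⟨_, hc, fun i => by exact_mod_cast Finset.inf'_le c (Finset.mem_univ i)⟩

section ShiftVector

variable (n : ℕ) {l : ℕ}

lemma bvec_add (r : Fin l → ℤ) (M c : ℤ) (i : Fin (l - 1)) :
    bvec n l r (M + c) i = bvec n l r M i + c / n := by
  simp only [bvec, Int.cast_add]
  ring

lemma bvec_zero_nonpos {a : Fin l → ℤ} (ha : Antitone a) (i : Fin (l - 1)) :
    bvec n l a 0 i ≤ 0 := by
  refine div_nonpos_of_nonpos_of_nonneg ?_ n.cast_nonneg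
  rw [Int.cast_zero, zero_add, sub_nonpos, Int.cast_le]
  exact ha (Fin.mk_le_mk.2 i.val.le_succ)

end ShiftVector

theorem stmt_15_general {n l : ℕ} (hn : 0 < n) {hl : 2 ≤ l} {a : Fin l → ℤ} (ha : Antitone a)
    {m : ℤ} (hm : m ∈ minSet l hl (bvec n l a 0)) (r : Fin l → ℤ) (M : ℤ) {c : ℤ}
    (hc : n * (2 - m) ≤ c) :
    bvec n l r M ∈ calA l (bvec n l r (M + c)) := by
  obtain ⟨c₀, hc₀, hmc₀⟩ := exists_mem_calA_forall_le_of_mem_minSet hm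
  have hgap : (2 - m : ℝ) ≤ c / n := by
    rw [le_div_iff₀' (by exact_mod_cast hn)]
    exact_mod_cast hc
  refine mem_calA_of_forall_add_le hc₀ hmc₀ fun i => ?_
  linarith [bvec_add n r M c i, bvec_zero_nonpos n ha i]

/-- Let `m_0(a)` be the maximum, over integer points `c` of `A(b(0; n, l, a))`, of the
minimal entry of `c`, let `m_0^{(min)}` be the minimum of `m_0(a)` over
`a ∈ A_{l,n}(s)`, and set `c := n + ⌈−m_0^{(min)}·n⌉ + nl`.  Then for every `M ∈ ℕ`
one has `b(M) ∈ A(b(M + c))`. -/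
theorem stmt_15 (n l : ℕ) (hn : 2 ≤ n) (hl : 2 ≤ l) (s : ℤ)
    (r : Fin l → ℤ) (hr : r ∈ Adom n l hl s)
    (m0 : (Fin l → ℤ) → ℤ)
    (hm0 : ∀ a ∈ Adom n l hl s, IsGreatest (minSet l hl (bvec n l a 0)) (m0 a))
    (m0min : ℤ) (hmin : IsLeast {v : ℤ | ∃ a ∈ Adom n l hl s, v = m0 a} m0min)
    (c : ℤ) (hc : c = (n : ℤ) + ⌈(-(m0min : ℝ) * (n : ℝ))⌉ + (n : ℤ) * (l : ℤ)) :
    ∀ M : ℕ, bvec n l r (M : ℤ) ∈ calA l (bvec n l r ((M : ℤ) + c)) := by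
  obtain ⟨a, ha, rfl⟩ := hmin.1
  have hceil : -m0 a * n ≤ ⌈-(m0 a : ℝ) * n⌉ := by exact_mod_cast Int.le_ceil (-(m0 a : ℝ) * n)
  exact fun M => stmt_15_general (by omega) (fun i j => ha.2.1 i j) (hm0 a ha).1 r M (by nlinarith)
end
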